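/- For every r ≥ 1 and every realization of the delays, the matrix F(r, r+D̂) = P̂(r)ᵀ·P̂(r+1)ᵀ⋯P̂(r+D̂)ᵀ, where D̂ = (B+1)·D + B + 1, is row stochastic and every entry of each of its first n columns (the compute-node columns) is strictly positive; consequently its improper coefficient of ergodicity c(F) = 1 − max_s min_k F_{ks} is strictly less than 1. -/

import Mathlib

open Matrix Filter BigOperators
open scoped Classical

noncomputable section

/-- A directed graph on `Fin n` with `m` directed edges, edge `e` going from
`src e` to `tgt e`. -/
structure DGraph (n m : ℕ) where
  src : Fin m → Fin n
  tgt : Fin m → Fin n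

/-- `y` is reachable from `x` by a directed path using at most `k` edges. -/
def ReachWithin {α : Type*} (adj : α → α → Prop) (k : ℕ) (x y : α) : Prop :=
  ∃ l : List α, l.length ≤ k ∧ List.Chain adj x l ∧
    (x :: l).getLast (List.cons_ne_nil x l) = y

/-- `D` is the diameter of the graph with adjacency relation `adj`: every node is
reachable from every node within `D` steps, and some ordered pair of nodes
requires `D` steps. -/
def IsDiameter {α : Type*} (adj : α → α → Prop) (D : ℕ) : Prop :=
  (∀ x y, ReachWithin adj D x y) ∧ (∃ x y, ∀ k, ReachWithin adj k x y → D ≤ k)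

/-- The adjacency relation of `G`. -/
def DGraph.adj {n m : ℕ} (G : DGraph n m) (a b : Fin n) : Prop :=
  ∃ e, G.src e = a ∧ G.tgt e = b

/-- Hypotheses of the Push-Sum random-delay model: no self-loops, distinct edges,
`P` column stochastic respecting `G` (hence with positive diagonal), and `G`
strongly connected. -/
structure DGraph.ValidCol {n m : ℕ} (G : DGraph n m) (P : Matrix (Fin n) (Fin n) ℝ) : Prop where
  noSelf : ∀ e, G.src e ≠ G.tgt e
  edgeInj : ∀ e e', G.src e = G.src e' → G.tgt e = G.tgt e' → e = e'
  nonneg : ∀ i j, 0 ≤ P i j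
  colSum : ∀ j, ∑ i, P i j = 1
  support : ∀ i j, 0 < P i j ↔ i = j ∨ ∃ e, G.src e = j ∧ G.tgt e = i
  connected : ∀ i j : Fin n, Relation.ReflTransGen G.adj i j

/-- Delay nodes: for every directed edge `e : Fin m`, every chain-length index
`ℓ : Fin B` (the parallel chain modelling a delay of `ℓ.1 + 1`), and every
position `k : Fin B` with `k ≤ ℓ` along that chain.  There are `m·B(B+1)/2`
of them in total. -/
def DelayNode (m B : ℕ) : Type :=
  {q : Fin m × Fin B × Fin B // q.2.2.1 ≤ q.2.1.1}

instance (m B : ℕ) : Fintype (DelayNode m B) := by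
  unfold DelayNode; infer_instance

instance (m B : ℕ) : DecidableEq (DelayNode m B) := by
  unfold DelayNode; infer_instance

namespace PushSumDelay

variable {n m B : ℕ}

/-- The edge a delay node belongs to. -/
def edgeOf (d : DelayNode m B) : Fin m := d.val.1
/-- The chain (of length `lenIdx d + 1`) a delay node belongs to. -/
def lenIdx (d : DelayNode m B) : ℕ := d.val.2.1.1
/-- The (0-indexed) position of a delay node along its chain. -/
def posIdx (d : DelayNode m B) : ℕ := d.val.2.2.1
/-- `d` is the terminal node of its chain. -/
def isTerminal (d : DelayNode m B) : Prop := d.val.2.2 = d.val.2.1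

/-- The fixed block-diagonal forward-shift matrix `C`. -/
def Cmat (m B : ℕ) : Matrix (DelayNode m B) (DelayNode m B) ℝ := fun d d' =>
  if d.val.1 = d'.val.1 ∧ d.val.2.1 = d'.val.2.1 ∧ posIdx d = posIdx d' + 1 then 1 else 0

/-- The fixed delivery matrix `J`: `J i d = 1` iff `d` is the terminal node of a
chain on an edge pointing into compute node `i`. -/
def Jmat (G : DGraph n m) (B : ℕ) : Matrix (Fin n) (DelayNode m B) ℝ := fun i d =>
  if G.tgt (edgeOf d) = i ∧ isTerminal d then 1 else 0

/-- `L(t)`: zero-delay deliveries. -/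
def Lmat (G : DGraph n m) (del : ℕ → Fin m → Fin (B + 1)) (t : ℕ) :
    Matrix (Fin n) (Fin n) ℝ := fun i j =>
  if ∃ e, G.src e = j ∧ G.tgt e = i ∧ (del t e).1 = 0 then 1 else 0

/-- `R(t)`: routing of messages into delay chains. -/
def Rmat (G : DGraph n m) (del : ℕ → Fin m → Fin (B + 1)) (t : ℕ) :
    Matrix (DelayNode m B) (Fin n) ℝ := fun d j =>
  if G.src (edgeOf d) = j ∧ posIdx d = 0 ∧ (del t (edgeOf d)).1 = lenIdx d + 1 then 1 else 0

/-- `P̄[R(t)]`: each `1` of `R(t)` (message from `j` routed into a chain towards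
`i = tgt e`) is replaced by the Push-Sum share `P i j`. -/
def PRmat (G : DGraph n m) (P : Matrix (Fin n) (Fin n) ℝ)
    (del : ℕ → Fin m → Fin (B + 1)) (t : ℕ) : Matrix (DelayNode m B) (Fin n) ℝ := fun d j =>
  Rmat G del t d j * P (G.tgt (edgeOf d)) j

/-- The Push-Sum delayed transition matrix
`P̂(t) = [[diag(P) + P∘L(t), J], [P̄[R(t)], C]]`. -/
def Phat (G : DGraph n m) (P : Matrix (Fin n) (Fin n) ℝ)
    (del : ℕ → Fin m → Fin (B + 1)) (t : ℕ) :
    Matrix (Fin n ⊕ DelayNode m B) (Fin n ⊕ DelayNode m B) ℝ :=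
  Matrix.fromBlocks
    (fun i j => (if i = j then P i j else 0) + P i j * Lmat G del t i j)
    (Jmat G B) (PRmat G P del t) (Cmat m B)

/-- Push-Sum sums: `ŝ(0) = (x(0), 0_b)`, `ŝ(t) = P̂(t)·ŝ(t−1)`. -/
def shat (G : DGraph n m) (P : Matrix (Fin n) (Fin n) ℝ)
    (del : ℕ → Fin m → Fin (B + 1)) (x0 : Fin n → ℝ) :
    ℕ → (Fin n ⊕ DelayNode m B) → ℝ
  | 0 => Sum.elim x0 (fun _ => 0)
  | t + 1 => Phat G P del (t + 1) *ᵥ shat G P del x0 t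

/-- Push-Sum weights: `ŵ(0) = (1_n, 0_b)`, `ŵ(t) = P̂(t)·ŵ(t−1)`. -/
def what (G : DGraph n m) (P : Matrix (Fin n) (Fin n) ℝ)
    (del : ℕ → Fin m → Fin (B + 1)) :
    ℕ → (Fin n ⊕ DelayNode m B) → ℝ
  | 0 => Sum.elim (fun _ => 1) (fun _ => 0)
  | t + 1 => Phat G P del (t + 1) *ᵥ what G P del t

/-- Forward products of transposes: `Fprod r k = P̂(r)ᵀ·P̂(r+1)ᵀ⋯P̂(r+k)ᵀ`,
i.e. `F(r, r+k)` in the paper's notation. -/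
def Fprod (G : DGraph n m) (P : Matrix (Fin n) (Fin n) ℝ)
    (del : ℕ → Fin m → Fin (B + 1)) (r : ℕ) :
    ℕ → Matrix (Fin n ⊕ DelayNode m B) (Fin n ⊕ DelayNode m B) ℝ
  | 0 => (Phat G P del r)ᵀ
  | k + 1 => Fprod G P del r k * (Phat G P del (r + k + 1))ᵀ

/-- The coefficient of ergodicity `τ₁(M) = (1/2)·max_{i,j} Σ_k |M_{ik} − M_{jk}|`. -/
def tau1 {V : Type*} [Fintype V] (M : Matrix V V ℝ) : ℝ :=
  sSup {z : ℝ | ∃ i j, z = (1 / 2) * ∑ k, |M i k - M j k|}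

/-- The improper coefficient of ergodicity `c(M) = 1 − max_s min_k M_{ks}`. -/
def cErg {V : Type*} [Fintype V] (M : Matrix V V ℝ) : ℝ :=
  1 - sSup {z : ℝ | ∃ s, z = sInf {y : ℝ | ∃ k, y = M k s}}

end PushSumDelay

end

/-! The matrix `P̂(t)` describes how mass moves between the instants `t` and `t + 1`, so an entry
of `F(r, r+k)` is positive as soon as mass can travel between the two corresponding nodes in exactly
`k + 1` steps. Mass waiting in a delay node is delivered within `B` steps, mass in a compute node
crosses any outgoing edge within `B + 1` steps whatever its delay, and since the diagonal of `P` is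
positive mass may also rest at a compute node, which absorbs the slack in these bounds. Hence
`B + (B + 1) * D` steps suffice to go from any node to any compute node. -/

namespace PushSumDelay

section Matrices

variable {V : Type*} [Fintype V]

lemma mul_apply_pos {U W R : Type*} [Semiring R] [PartialOrder R] [IsStrictOrderedRing R]
    {M : Matrix U V R} {N : Matrix V W R} (hM : ∀ u v, 0 ≤ M u v) (hN : ∀ v w, 0 ≤ N v w)
    {u : U} {v : V} {w : W} (huv : 0 < M u v) (hvw : 0 < N v w) : 0 < (M * N) u w :=
  Finset.sum_pos' (fun x _ => mul_nonneg (hM u x) (hN x w)) ⟨v, Finset.mem_univ v, mul_pos huv hvw⟩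

lemma cErg_eq_one_sub_iSup_iInf (M : Matrix V V ℝ) : cErg M = 1 - ⨆ s, ⨅ k, M k s := by
  simp only [cErg, iSup, iInf, Set.range, eq_comm]

lemma cErg_lt_one_of_pos_col {M : Matrix V V ℝ} {s : V} (hs : ∀ k, 0 < M k s) : cErg M < 1 := by
  have : Nonempty V := ⟨s⟩
  obtain ⟨k, hk⟩ := exists_eq_ciInf_of_finite (f := fun k => M k s)
  have hsup : ⨅ k, M k s ≤ ⨆ s, ⨅ k, M k s :=
    le_ciSup (f := fun s => ⨅ k, M k s) (Set.finite_range _).bddAbove s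
  rw [cErg_eq_one_sub_iSup_iInf, sub_lt_self_iff]
  exact (hs k).trans_le (hk.trans_le hsup)

end Matrices

section DelayNodes

variable {m B : ℕ}

lemma posIdx_le_lenIdx (d : DelayNode m B) : posIdx d ≤ lenIdx d := d.2

lemma lenIdx_lt (d : DelayNode m B) : lenIdx d < B := d.val.2.1.2

lemma isTerminal_iff {d : DelayNode m B} : isTerminal d ↔ posIdx d = lenIdx d := Fin.ext_iff

lemma delayNode_ext {d d' : DelayNode m B} (hedge : edgeOf d = edgeOf d')
    (hlen : lenIdx d = lenIdx d') (hpos : posIdx d = posIdx d') : d = d' :=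
  Subtype.ext (Prod.ext hedge (Prod.ext (Fin.ext hlen) (Fin.ext hpos)))

/-- The first node of the delay chain of length `ℓ + 1` on the edge `e`. -/
def chainHead (e : Fin m) (ℓ : Fin B) : DelayNode m B :=
  ⟨(e, ℓ, ⟨0, ℓ.pos⟩), Nat.zero_le _⟩

/-- The successor of a non-terminal delay node along its chain. -/
def chainNext (d : DelayNode m B) (h : posIdx d < lenIdx d) : DelayNode m B :=
  ⟨(d.val.1, d.val.2.1, ⟨posIdx d + 1, lt_of_le_of_lt h (lenIdx_lt d)⟩), h⟩

lemma Cmat_apply_of_lt {d : DelayNode m B} (h : posIdx d < lenIdx d) (d' : DelayNode m B) :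
    Cmat m B d' d = if d' = chainNext d h then 1 else 0 := by
  refine if_congr ⟨?_, ?_⟩ rfl rfl
  · rintro ⟨hedge, hlen, hpos⟩
    exact delayNode_ext hedge (congrArg Fin.val hlen) hpos
  · rintro rfl
    exact ⟨rfl, rfl, rfl⟩

lemma Cmat_apply_of_isTerminal {d : DelayNode m B} (h : isTerminal d) (d' : DelayNode m B) :
    Cmat m B d' d = 0 := by
  refine if_neg fun ⟨_, hchain, hpos⟩ => ?_
  have hlen : lenIdx d' = lenIdx d := congrArg Fin.val hchain
  refine (posIdx_le_lenIdx d').not_gt ?_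
  rw [hpos, hlen, isTerminal_iff.mp h]
  exact Nat.lt_succ_self _

end DelayNodes

variable {n m B : ℕ} {G : DGraph n m} {P : Matrix (Fin n) (Fin n) ℝ}
  {del : ℕ → Fin m → Fin (B + 1)}

lemma Phat_inl_inl (t : ℕ) (i j : Fin n) : Phat G P del t (Sum.inl i) (Sum.inl j) =
    (if i = j then P i j else 0) + P i j * Lmat G del t i j := rfl

lemma Phat_inl_inr (t : ℕ) (i : Fin n) (d : DelayNode m B) :
    Phat G P del t (Sum.inl i) (Sum.inr d) = Jmat G B i d := rfl

lemma Phat_inr_inl (t : ℕ) (d : DelayNode m B) (j : Fin n) :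
    Phat G P del t (Sum.inr d) (Sum.inl j) = PRmat G P del t d j := rfl

lemma Phat_inr_inr (t : ℕ) (d d' : DelayNode m B) :
    Phat G P del t (Sum.inr d) (Sum.inr d') = Cmat m B d d' := rfl

section Stochasticity

lemma Phat_nonneg (hV : G.ValidCol P) (t : ℕ) (u v : Fin n ⊕ DelayNode m B) :
    0 ≤ Phat G P del t u v := by
  rcases u with i | d <;> rcases v with j | d'
  · have hshare := hV.nonneg i j
    rw [Phat_inl_inl, Lmat]
    split_ifs <;> linarith
  · rw [Phat_inl_inr, Jmat]
    split_ifs <;> norm_num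
  · have hshare := hV.nonneg (G.tgt (edgeOf d)) j
    rw [Phat_inr_inl, PRmat, Rmat]
    split_ifs <;> linarith
  · rw [Phat_inr_inr, Cmat]
    split_ifs <;> norm_num

/-- The edges leaving the node `j`. -/
def outEdges (G : DGraph n m) (j : Fin n) : Finset (Fin m) := {e | G.src e = j}

lemma mem_outEdges {e : Fin m} {j : Fin n} : e ∈ outEdges G j ↔ G.src e = j := by
  simp [outEdges]

lemma tgt_injOn_outEdges (hV : G.ValidCol P) (j : Fin n) :
    Set.InjOn G.tgt (outEdges G j) := fun _ he _ he' htgt =>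
  hV.edgeInj _ _ ((mem_outEdges.mp he).trans (mem_outEdges.mp he').symm) htgt

lemma share_self_add_sum_outEdges (hV : G.ValidCol P) (j : Fin n) :
    P j j + ∑ e ∈ outEdges G j, P (G.tgt e) j = 1 := by
  have hself : j ∉ (outEdges G j).image G.tgt := by
    simp only [Finset.mem_image, mem_outEdges, not_exists, not_and]
    rintro e rfl
    exact (hV.noSelf e).symm
  rw [← Finset.sum_image (f := fun i => P i j) (tgt_injOn_outEdges hV j),
    ← Finset.sum_insert (f := fun i => P i j) hself, ← hV.colSum j]
  refine Finset.sum_subset (Finset.subset_univ _) fun i _ hi => ?_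
  refine ((hV.nonneg i j).eq_of_not_lt fun hpos => hi ?_).symm
  simpa only [Finset.mem_insert, Finset.mem_image, mem_outEdges] using (hV.support i j).mp hpos

lemma sum_share_mul_Lmat (hV : G.ValidCol P) (t : ℕ) (j : Fin n) :
    ∑ i, P i j * Lmat G del t i j = ∑ e ∈ outEdges G j with del t e = 0, P (G.tgt e) j := by
  have himage : ({i | ∃ e, G.src e = j ∧ G.tgt e = i ∧ (del t e).1 = 0} : Finset (Fin n)) =
      ({e ∈ outEdges G j | del t e = 0}).image G.tgt := by
    ext i
    simp only [Finset.mem_image, Finset.mem_filter, mem_outEdges, Fin.ext_iff, Fin.val_zero]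
    grind
  simp only [Lmat, mul_ite, mul_one, mul_zero]
  rw [← Finset.sum_filter, himage, Finset.sum_image]
  exact (tgt_injOn_outEdges hV j).mono (Finset.filter_subset _ _)

lemma sum_PRmat (t : ℕ) (j : Fin n) :
    ∑ d, PRmat G P del t d j = ∑ e ∈ outEdges G j with ¬ del t e = 0, P (G.tgt e) j := by
  simp only [PRmat, Rmat, ite_mul, one_mul, zero_mul]
  rw [← Finset.sum_filter]
  refine Finset.sum_nbij edgeOf ?maps ?inj ?surj fun _ _ => rfl
  case maps =>
    intro d hd
    obtain ⟨hsrc, -, hdel⟩ := (Finset.mem_filter_univ d).mp hd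
    have hne : del t (edgeOf d) ≠ 0 := fun h => by simp [h] at hdel
    exact Finset.mem_filter.mpr ⟨mem_outEdges.mpr hsrc, hne⟩
  case inj =>
    intro d hd d' hd' hedge
    obtain ⟨-, hpos, hdel⟩ := (Finset.mem_filter_univ d).mp hd
    obtain ⟨-, hpos', hdel'⟩ := (Finset.mem_filter_univ d').mp hd'
    refine delayNode_ext hedge ?_ (hpos.trans hpos'.symm)
    rw [hedge] at hdel
    omega
  case surj =>
    intro e he
    obtain ⟨hsrc, hne⟩ := Finset.mem_filter.mp he
    obtain ⟨ℓ, hℓ⟩ := Fin.exists_succ_eq.mpr hne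
    have hdel : (del t e).1 = ℓ + 1 := by rw [← hℓ, Fin.val_succ]
    exact ⟨chainHead e ℓ,
      (Finset.mem_filter_univ _).mpr ⟨mem_outEdges.mp hsrc, rfl, hdel⟩, rfl⟩

lemma sum_Phat_compute (hV : G.ValidCol P) (t : ℕ) (j : Fin n) :
    ∑ v, Phat G P del t v (Sum.inl j) = 1 := by
  simp only [Fintype.sum_sum_type, Phat_inl_inl, Phat_inr_inl, Finset.sum_add_distrib,
    Finset.sum_ite_eq', Finset.mem_univ, if_true]
  rw [sum_share_mul_Lmat hV, sum_PRmat, add_assoc, Finset.sum_filter_add_sum_filter_not,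
    share_self_add_sum_outEdges hV]

lemma sum_Phat_delay (t : ℕ) (d : DelayNode m B) :
    ∑ v, Phat G P del t v (Sum.inr d) = 1 := by
  simp only [Fintype.sum_sum_type, Phat_inl_inr, Phat_inr_inr]
  by_cases hterm : isTerminal d
  · simp [Jmat, Cmat_apply_of_isTerminal hterm, hterm]
  · have hlt := (posIdx_le_lenIdx d).lt_of_ne (mt isTerminal_iff.mpr hterm)
    simp [Jmat, Cmat_apply_of_lt hlt, hterm]

lemma Phat_mem_colStochastic (hV : G.ValidCol P) (t : ℕ) :
    Phat G P del t ∈ colStochastic ℝ (Fin n ⊕ DelayNode m B) :=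
  mem_colStochastic_iff_sum.mpr
    ⟨Phat_nonneg hV t, Sum.rec (sum_Phat_compute hV t) (sum_Phat_delay t)⟩

lemma Fprod_mem_rowStochastic (hV : G.ValidCol P) (r k : ℕ) :
    Fprod G P del r k ∈ rowStochastic ℝ (Fin n ⊕ DelayNode m B) := by
  have htranspose (t : ℕ) :=
    transpose_mem_rowStochastic_iff_mem_colStochastic.mpr (Phat_mem_colStochastic (del := del) hV t)
  induction k with
  | zero => exact htranspose r
  | succ k ih => exact mul_mem ih (htranspose (r + k + 1))

end Stochasticity

section MassPaths

/-- One step in the space-time graph of a sequence of transition matrices: mass that is in node `v`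
at time `t` can be in node `w` at time `t + 1`. The time `t` is the instant just before `A t` is
applied, and `A t w v` is the share sent from `v` to `w`. -/
def MassStep {V R : Type*} [Zero R] [LT R] (A : ℕ → Matrix V V R) (x y : ℕ × V) : Prop :=
  y.1 = x.1 + 1 ∧ 0 < A x.1 y.2 x.2

/-- `MassPath A (s, v) (t, w)`: mass that is in node `v` at time `s` can be in node `w` at
time `t`. -/
abbrev MassPath {V R : Type*} [Zero R] [LT R] (A : ℕ → Matrix V V R) : ℕ × V → ℕ × V → Prop :=
  Relation.ReflTransGen (MassStep A)

lemma Fprod_pos_of_massPath (hV : G.ValidCol P) {r k : ℕ} {u v : Fin n ⊕ DelayNode m B}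
    (h : MassPath (Phat G P del) (r, u) (r + k + 1, v)) : 0 < Fprod G P del r k u v := by
  suffices ∀ x, Relation.TransGen (MassStep (Phat G P del)) (r, u) x →
      ∃ l, x.1 = r + l + 1 ∧ 0 < Fprod G P del r l u x.2 by
    have hne : (r + k + 1, v) ≠ (r, u) := by simp [add_assoc]
    obtain ⟨l, hl, hpos⟩ :=
      this _ ((Relation.reflTransGen_iff_eq_or_transGen.mp h).resolve_left hne)
    obtain rfl : k = l := by simpa using hl
    exact hpos
  intro x hx
  induction hx with
  | single hstep => exact ⟨0, hstep⟩
  | tail _ hstep ih =>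
    obtain ⟨l, hl, hpos⟩ := ih
    obtain ⟨htime, hshare⟩ := hstep
    rw [hl] at htime hshare
    exact ⟨l + 1, htime, mul_apply_pos
      (fun _ _ => nonneg_of_mem_rowStochastic (Fprod_mem_rowStochastic hV r l))
      (fun v w => Phat_nonneg hV _ w v) hpos hshare⟩

lemma massStep_self (hV : G.ValidCol P) (t : ℕ) (i : Fin n) :
    MassStep (Phat G P del) (t, Sum.inl i) (t + 1, Sum.inl i) := by
  have hshare : 0 < P i i := (hV.support i i).mpr (Or.inl rfl)
  refine ⟨rfl, ?_⟩
  rw [Phat_inl_inl, Lmat, if_pos rfl]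
  split_ifs <;> linarith

lemma massStep_of_delay_eq_zero (hV : G.ValidCol P) {t : ℕ} {e : Fin m} (h : del t e = 0) :
    MassStep (Phat G P del) (t, Sum.inl (G.src e)) (t + 1, Sum.inl (G.tgt e)) := by
  have hshare : 0 < P (G.tgt e) (G.src e) := (hV.support _ _).mpr (Or.inr ⟨e, rfl, rfl⟩)
  have hzero : ∃ e', G.src e' = G.src e ∧ G.tgt e' = G.tgt e ∧ (del t e').1 = 0 :=
    ⟨e, rfl, rfl, congrArg Fin.val h⟩
  refine ⟨rfl, ?_⟩
  simpa only [Phat_inl_inl, Lmat, if_pos hzero, if_neg (hV.noSelf e).symm, zero_add,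
    mul_one]

lemma massStep_of_delay_eq_succ (hV : G.ValidCol P) {t : ℕ} {e : Fin m} {ℓ : Fin B}
    (h : del t e = ℓ.succ) :
    MassStep (Phat G P del) (t, Sum.inl (G.src e)) (t + 1, Sum.inr (chainHead e ℓ)) := by
  have hshare : 0 < P (G.tgt e) (G.src e) := (hV.support _ _).mpr (Or.inr ⟨e, rfl, rfl⟩)
  refine ⟨rfl, mul_pos (lt_of_lt_of_eq one_pos (if_pos ⟨rfl, rfl, ?_⟩).symm) hshare⟩
  exact congrArg Fin.val h

lemma massStep_chainNext (t : ℕ) {d : DelayNode m B} (h : posIdx d < lenIdx d) :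
    MassStep (Phat G P del) (t, Sum.inr d) (t + 1, Sum.inr (chainNext d h)) :=
  ⟨rfl, by simp [Phat_inr_inr, Cmat_apply_of_lt h]⟩

lemma massStep_of_isTerminal (t : ℕ) {d : DelayNode m B} (h : isTerminal d) :
    MassStep (Phat G P del) (t, Sum.inr d) (t + 1, Sum.inl (G.tgt (edgeOf d))) :=
  ⟨rfl, by simp [Phat_inl_inr, Jmat, h]⟩

lemma massPath_self (hV : G.ValidCol P) {s t : ℕ} (hst : s ≤ t) (i : Fin n) :
    MassPath (Phat G P del) (s, Sum.inl i) (t, Sum.inl i) := by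
  induction t, hst using Nat.le_induction with
  | base => exact .refl
  | succ t _ ih => exact ih.tail (massStep_self hV t i)

lemma massPath_chain (t : ℕ) {d : DelayNode m B} {a : ℕ} (ha : posIdx d + a = lenIdx d) :
    MassPath (Phat G P del) (t, Sum.inr d) (t + a + 1, Sum.inl (G.tgt (edgeOf d))) := by
  induction a generalizing t d with
  | zero => exact .single (massStep_of_isTerminal t (isTerminal_iff.mpr ha))
  | succ a ih =>
    have hlt : posIdx d < lenIdx d := by omega
    have hnext : posIdx (chainNext d hlt) + a = lenIdx (chainNext d hlt) :=
      (Nat.add_right_comm _ _ _).trans ha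
    rw [← add_assoc, add_right_comm t]
    exact .head (massStep_chainNext t hlt) (ih (t + 1) hnext)

lemma massPath_delay (hV : G.ValidCol P) (t : ℕ) (d : DelayNode m B) :
    MassPath (Phat G P del) (t, Sum.inr d) (t + B, Sum.inl (G.tgt (edgeOf d))) := by
  obtain ⟨a, ha⟩ := Nat.exists_eq_add_of_le (posIdx_le_lenIdx d)
  have hlen := lenIdx_lt d
  exact (massPath_chain t ha.symm).trans (massPath_self hV (by omega) _)

lemma exists_massPath_compute (hV : G.ValidCol P) (t : ℕ) (u : Fin n ⊕ DelayNode m B) :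
    ∃ i, MassPath (Phat G P del) (t, u) (t + B, Sum.inl i) := by
  rcases u with i | d
  · exact ⟨i, massPath_self hV (Nat.le_add_right t B) i⟩
  · exact ⟨_, massPath_delay hV t d⟩

lemma massPath_of_adj (hV : G.ValidCol P) (t : ℕ) {i j : Fin n} (hij : G.adj i j) :
    MassPath (Phat G P del) (t, Sum.inl i) (t + (B + 1), Sum.inl j) := by
  obtain ⟨e, rfl, rfl⟩ := hij
  by_cases h : del t e = 0
  · exact .head (massStep_of_delay_eq_zero hV h) (massPath_self hV (by omega) _)
  · obtain ⟨ℓ, hℓ⟩ := Fin.exists_succ_eq.mpr h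
    rw [add_comm B, ← add_assoc]
    exact .head (massStep_of_delay_eq_succ hV hℓ.symm) (massPath_delay hV (t + 1) _)

lemma massPath_of_reachWithin (hV : G.ValidCol P) (t : ℕ) {D : ℕ} {i j : Fin n}
    (hij : ReachWithin G.adj D i j) :
    MassPath (Phat G P del) (t, Sum.inl i) (t + (B + 1) * D, Sum.inl j) := by
  obtain ⟨l, hlen, hchain, hlast⟩ := hij
  suffices MassPath (Phat G P del) (t, Sum.inl i) (t + (B + 1) * l.length, Sum.inl j) from
    this.trans (massPath_self hV (by gcongr) j)
  clear hlen
  induction l generalizing i t with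
  | nil =>
    obtain rfl : i = j := hlast
    exact .refl
  | cons a l ih =>
    obtain ⟨hadj, hrest⟩ := List.isChain_cons_cons.mp hchain
    rw [List.length_cons, Nat.mul_succ, add_comm (_ * _), ← add_assoc]
    exact (massPath_of_adj hV t hadj).trans (ih _ hrest (by simpa using hlast))

end MassPaths

lemma Fprod_inl_pos (hV : G.ValidCol P) {D k : ℕ} (hD : ∀ i j, ReachWithin G.adj D i j)
    (hk : (B + 1) * D + B ≤ k + 1) (r : ℕ) (u : Fin n ⊕ DelayNode m B) (j : Fin n) :
    0 < Fprod G P del r k u (Sum.inl j) := by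
  obtain ⟨i, hui⟩ := exists_massPath_compute (del := del) hV r u
  exact Fprod_pos_of_massPath hV <| hui.trans <|
    (massPath_of_reachWithin hV (r + B) (hD i j)).trans (massPath_self hV (by omega) j)

end PushSumDelay

open PushSumDelay in
theorem pushSum_random_delay_Fprod_positive_columns_general
    {n m B D k : ℕ} (hn : 0 < n)
    (G : DGraph n m) (P : Matrix (Fin n) (Fin n) ℝ) (hV : G.ValidCol P)
    (hD : ∀ i j, ReachWithin G.adj D i j)
    (del : ℕ → Fin m → Fin (B + 1)) (r : ℕ) (hk : (B + 1) * D + B ≤ k + 1) :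
    (∀ u v, 0 ≤ Fprod G P del r k u v) ∧
    (∀ u, ∑ v, Fprod G P del r k u v = 1) ∧
    (∀ u (j : Fin n), 0 < Fprod G P del r k u (Sum.inl j)) ∧
    cErg (Fprod G P del r k) < 1 := by
  have hstoch := mem_rowStochastic_iff_sum.mp (Fprod_mem_rowStochastic (del := del) hV r k)
  have hpos := Fprod_inl_pos (del := del) hV hD hk r
  exact ⟨hstoch.1, hstoch.2, hpos, cErg_lt_one_of_pos_col fun u => hpos u ⟨0, hn⟩⟩

open PushSumDelay in
/-- **Positivity of the compute-node columns of `F(r, r+D̂)`.**  With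
`D̂ = (B+1)·D + B + 1`, for every `r ≥ 1` and every realization of the delays, the
forward product `F(r, r+D̂) = P̂(r)ᵀ·P̂(r+1)ᵀ⋯P̂(r+D̂)ᵀ` is row stochastic, each of
its first `n` (compute-node) columns is entrywise strictly positive, and
consequently its improper coefficient of ergodicity `c(F) = 1 − max_s min_k F_{ks}`
is strictly less than `1`. -/
theorem pushSum_random_delay_Fprod_positive_columns
    {n m B D : ℕ} (hn : 0 < n) (hB : 1 ≤ B)
    (G : DGraph n m) (P : Matrix (Fin n) (Fin n) ℝ) (hV : G.ValidCol P)
    (hD : IsDiameter G.adj D)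
    (del : ℕ → Fin m → Fin (B + 1)) (r : ℕ) (hr : 1 ≤ r) :
    (∀ u v, 0 ≤ Fprod G P del r ((B + 1) * D + B + 1) u v) ∧
    (∀ u, ∑ v, Fprod G P del r ((B + 1) * D + B + 1) u v = 1) ∧
    (∀ u (j : Fin n), 0 < Fprod G P del r ((B + 1) * D + B + 1) u (Sum.inl j)) ∧
    cErg (Fprod G P del r ((B + 1) * D + B + 1)) < 1 :=
  pushSum_random_delay_Fprod_positive_columns_general hn G P hV hD.1 del r (by omega)
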